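/- arXiv:1912.07528 — 6 statements merged into one kernel-verified Lean document; each statement's English description precedes it below -/
import Mathlib

section
/- For every t with 1 ≤ t ≤ K−2, the quantity σ_t satisfies 0 < σ_t < 1 and σ_{t+1} < σ_t; i.e., the sequence σ_1, σ_2, ..., σ_{K−1} is strictly decreasing and lies in the open interval (0,1). -/
/-- `σ_t = 1 + log((t+1)/(t+2)) / log((t+1)/t)`. -/
noncomputable def sigma (t : ℕ) : ℝ :=
  1 + Real.log (((t : ℝ) + 1) / ((t : ℝ) + 2)) / Real.log (((t : ℝ) + 1) / (t : ℝ))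

/-- The squared form of `log x ≤ (x - 1) / √x`. -/
theorem Real.log_sq_le {x : ℝ} (hx : 1 ≤ x) : Real.log x ^ 2 ≤ (x - 1) ^ 2 / x := by
  have hs : 0 < √x := Real.sqrt_pos.2 (by linarith)
  have hsq : √x ^ 2 = x := Real.sq_sqrt (by linarith)
  have hlog : Real.log x = 2 * Real.log √x := by
    rw [Real.log_sqrt (by linarith)]; ring
  have hnonneg : 0 ≤ Real.log √x := Real.log_nonneg (Real.one_le_sqrt.2 hx)
  have hsinh : Real.log √x ≤ (√x - (√x)⁻¹) / 2 := by
    rw [← Real.sinh_log hs]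
    exact Real.self_le_sinh_iff.2 hnonneg
  calc Real.log x ^ 2 = (2 * Real.log √x) ^ 2 := by rw [hlog]
    _ ≤ (√x - (√x)⁻¹) ^ 2 := by gcongr; linarith
    _ = (√x ^ 2 - 1) ^ 2 / √x ^ 2 := by field_simp
    _ = (x - 1) ^ 2 / x := by rw [hsq]

theorem log_succ_div_pos {x : ℝ} (hx : 0 < x) : 0 < Real.log ((x + 1) / x) :=
  Real.log_pos ((one_lt_div hx).2 (by linarith))

theorem log_succ_div_lt {x : ℝ} (hx : 0 < x) :
    Real.log ((x + 2) / (x + 1)) < Real.log ((x + 1) / x) := by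
  apply Real.log_lt_log (by positivity)
  rw [div_lt_div_iff₀ (by positivity) hx]
  nlinarith

theorem two_div_le_log_succ_div {x : ℝ} (hx : 0 < x) :
    2 / (2 * x + 1) ≤ Real.log ((x + 1) / x) := by
  have h := Real.le_log_one_add_of_nonneg (x := 1 / x) (by positivity)
  have hl : 2 * (1 / x) / (1 / x + 2) = 2 / (2 * x + 1) := by field_simp; ring
  have hr : 1 + 1 / x = (x + 1) / x := by field_simp
  rwa [hl, hr] at h

/-- Strict log-convexity of `x ↦ log ((x + 1) / x)` along unit steps. -/
theorem log_succ_div_sq_lt_mul {x : ℝ} (hx : 0 < x) :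
    Real.log ((x + 2) / (x + 1)) ^ 2 <
      Real.log ((x + 1) / x) * Real.log ((x + 3) / (x + 2)) := by
  have hlow := two_div_le_log_succ_div hx
  have hhigh := two_div_le_log_succ_div (x := x + 2) (by linarith)
  rw [show x + 2 + 1 = x + 3 by ring] at hhigh
  calc Real.log ((x + 2) / (x + 1)) ^ 2
      ≤ ((x + 2) / (x + 1) - 1) ^ 2 / ((x + 2) / (x + 1)) :=
        Real.log_sq_le ((one_le_div (by linarith)).2 (by linarith))
    _ = 1 / ((x + 1) * (x + 2)) := by field_simp; ring
    _ < 2 / (2 * x + 1) * (2 / (2 * (x + 2) + 1)) := by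
        rw [div_mul_div_comm, div_lt_div_iff₀ (by positivity) (by positivity)]
        nlinarith
    _ ≤ _ := mul_le_mul hlow hhigh (by positivity) (log_succ_div_pos hx).le

theorem sigma_eq_one_sub (t : ℕ) :
    sigma t = 1 - Real.log (((t : ℝ) + 2) / (t + 1)) / Real.log (((t : ℝ) + 1) / t) := by
  rw [sigma, ← inv_div ((t : ℝ) + 2), Real.log_inv]
  ring

theorem sigma_strict_anti_and_mem_Ioo
    (K : ℕ) (hK : 3 ≤ K) :
    ∀ t : ℕ, 1 ≤ t → t ≤ K - 2 →
      0 < sigma t ∧ sigma t < 1 ∧ sigma (t + 1) < sigma t := by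
  intro t ht _
  have hx : (0 : ℝ) < t := by exact_mod_cast ht
  have ha := log_succ_div_pos hx
  have hb := log_succ_div_pos (x := (t : ℝ) + 1) (by linarith)
  rw [show (t : ℝ) + 1 + 1 = t + 2 by ring] at hb
  refine ⟨?_, ?_, ?_⟩
  · rw [sigma_eq_one_sub, sub_pos, div_lt_one ha]
    exact log_succ_div_lt hx
  · rw [sigma_eq_one_sub]
    exact sub_lt_self _ (div_pos hb ha)
  · rw [sigma_eq_one_sub, sigma_eq_one_sub]
    push_cast
    rw [show (t : ℝ) + 1 + 2 = t + 3 by ring, show (t : ℝ) + 1 + 1 = t + 2 by ring]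
    apply sub_lt_sub_left
    rw [div_lt_div_iff₀ ha hb]
    linarith [log_succ_div_sq_lt_mul hx]
end

section
/- There exists an optimal solution y* of the caching LP with at most two nonzero coordinates; i.e., there is a feasible y* attaining the maximum of f with |{t : y*_t ≠ 0}| ≤ 2. (This corresponds to the statement that the optimal placement uses at most two types of subfiles.) -/
/-- Transmission cost per placement of a type-`t` subfile: `c_t = ρ·t^α`. -/
noncomputable def cCost (ρ α : ℝ) (t : ℕ) : ℝ := ρ * (t : ℝ) ^ α

/-- `q_t = (N·c_t·(t+1) + t·(K+1)) / (K·(t+1))`. -/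
noncomputable def q (K N : ℕ) (ρ α : ℝ) (t : ℕ) : ℝ :=
  ((N : ℝ) * cCost ρ α t * ((t : ℝ) + 1) + (t : ℝ) * ((K : ℝ) + 1)) /
    ((K : ℝ) * ((t : ℝ) + 1))

/-- Feasibility for the caching LP: `Σ_{t=1}^K q_t·y_t ≤ 1`, `Σ_{t=1}^K y_t ≤ 1`,
and `y_t ≥ 0` for all `t ∈ {1,…,K}`. -/
def Feasible (K N : ℕ) (ρ α : ℝ) (y : ℕ → ℝ) : Prop :=
  (∑ t ∈ Finset.Icc 1 K, q K N ρ α t * y t ≤ 1) ∧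
  (∑ t ∈ Finset.Icc 1 K, y t ≤ 1) ∧
  (∀ t ∈ Finset.Icc 1 K, 0 ≤ y t)

/-- The caching LP objective `f(y) = Σ_{t=1}^K (t/(t+1))·y_t`. -/
noncomputable def objF (K : ℕ) (y : ℕ → ℝ) : ℝ :=
  ∑ t ∈ Finset.Icc 1 K, ((t : ℝ) / ((t : ℝ) + 1)) * y t

open Finset in
/-- Among the vectors supported on a finite set of size at least three, some nonzero one is
annihilated by both the sum and a weighted sum, and it may be chosen so as not to decrease a
given linear objective. -/
lemma exists_balanced_direction {ι : Type*} {T : Finset ι} (hT : 2 < #T) (a w : ι → ℝ) :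
    ∃ d : ι → ℝ, (∀ t ∉ T, d t = 0) ∧ (∃ t ∈ T, d t ≠ 0) ∧ ∑ t ∈ T, d t = 0 ∧
      ∑ t ∈ T, a t * d t = 0 ∧ 0 ≤ ∑ t ∈ T, w t * d t := by
  classical
  have hdep : ¬ LinearIndepOn ℝ (fun t => ((1 : ℝ), a t)) (T : Set ι) := by
    intro h
    have hcard := LinearIndependent.fintype_card_le_finrank h
    simp at hcard
    omega
  obtain ⟨f, hf, i, hi, hfi⟩ := not_linearIndepOn_finset_iff.1 hdep
  have h1 : ∑ t ∈ T, f t = 0 := by simpa [Prod.fst_sum] using congrArg Prod.fst hf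
  have h2 : ∑ t ∈ T, a t * f t = 0 := by
    simpa [Prod.snd_sum, mul_comm] using congrArg Prod.snd hf
  have key : ∀ g : ι → ℝ, ∑ t ∈ T, g t * (if t ∈ T then f t else 0) = ∑ t ∈ T, g t * f t :=
    fun g => sum_congr rfl fun t ht => by rw [if_pos ht]
  have key1 : ∑ t ∈ T, (if t ∈ T then f t else 0) = ∑ t ∈ T, f t := by simp
  rcases le_total 0 (∑ t ∈ T, w t * f t) with hw | hw
  · refine ⟨fun t => if t ∈ T then f t else 0, fun t ht => if_neg ht, ⟨i, hi, by simpa [hi]⟩,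
      ?_, ?_, ?_⟩
    · rw [key1, h1]
    · rw [key, h2]
    · rwa [key]
  · refine ⟨fun t => -(if t ∈ T then f t else 0), fun t ht => by simp [ht],
      ⟨i, hi, by simpa [hi]⟩, ?_, ?_, ?_⟩
    · rw [sum_neg_distrib, key1, h1, neg_zero]
    · simp only [mul_neg, sum_neg_distrib]
      rw [key, h2, neg_zero]
    · simp only [mul_neg, sum_neg_distrib]
      rw [key]
      linarith

open Finset in
/-- Moving a nonnegative vector along a direction with a negative coordinate until a
decreasing coordinate vanishes. -/
lemma exists_step_to_boundary {ι : Type*} {s : Finset ι} {y d : ι → ℝ}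
    (hy : ∀ t ∈ s, 0 ≤ y t) (hd : ∃ t ∈ s, d t < 0) :
    ∃ ε : ℝ, 0 ≤ ε ∧ (∀ t ∈ s, 0 ≤ y t + ε * d t) ∧ ∃ t ∈ s, d t < 0 ∧ y t + ε * d t = 0 := by
  classical
  obtain ⟨j, hj, hdj⟩ := hd
  obtain ⟨i, hi, hmin⟩ := exists_min_image (s.filter fun t => d t < 0) (fun t => y t / -d t)
    ⟨j, mem_filter.2 ⟨hj, hdj⟩⟩
  obtain ⟨his, hdi⟩ := mem_filter.1 hi
  have hε : 0 ≤ y i / -d i := div_nonneg (hy i his) (by linarith)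
  refine ⟨y i / -d i, hε, fun t ht => ?_, i, his, hdi, ?_⟩
  · rcases lt_or_ge (d t) 0 with hdt | hdt
    · have h := hmin t (mem_filter.2 ⟨ht, hdt⟩)
      rw [le_div_iff₀ (by linarith)] at h
      linarith
    · exact add_nonneg (hy t ht) (mul_nonneg hε hdt)
  · field_simp [hdi.ne]
    ring

open Finset in
/-- A nonnegative vector with more than two nonzero coordinates can be replaced by one with fewer
nonzero coordinates, the same sum, the same weighted sum, and no smaller objective. -/
lemma exists_card_support_lt {ι : Type*} {s : Finset ι} (a w : ι → ℝ) {y : ι → ℝ}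
    (hy : ∀ t ∈ s, 0 ≤ y t) (hcard : 2 < #{t ∈ s | y t ≠ 0}) :
    ∃ z : ι → ℝ, (∀ t ∈ s, 0 ≤ z t) ∧ ∑ t ∈ s, z t = ∑ t ∈ s, y t ∧
      ∑ t ∈ s, a t * z t = ∑ t ∈ s, a t * y t ∧ ∑ t ∈ s, w t * y t ≤ ∑ t ∈ s, w t * z t ∧
      #{t ∈ s | z t ≠ 0} < #{t ∈ s | y t ≠ 0} := by
  classical
  obtain ⟨d, hd0, ⟨i, hi, hdi⟩, hsum, hasum, hwsum⟩ := exists_balanced_direction hcard a w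
  have hneg : ∃ t ∈ s, d t < 0 := by
    by_contra! h
    exact hdi ((sum_eq_zero_iff_of_nonneg fun t ht => h t (mem_filter.1 ht).1).1 hsum i hi)
  have ext_sum : ∀ g : ι → ℝ, ∑ t ∈ s with y t ≠ 0, g t * d t = ∑ t ∈ s, g t * d t :=
    fun g => sum_subset (filter_subset _ _) fun t _ ht => by rw [hd0 t ht, mul_zero]
  have ext_sum_one : ∑ t ∈ s with y t ≠ 0, d t = ∑ t ∈ s, d t := by simpa using ext_sum 1
  rw [ext_sum] at hasum hwsum
  rw [ext_sum_one] at hsum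
  obtain ⟨ε, hε, hnn, j, hj, hdj, hzero⟩ := exists_step_to_boundary hy hneg
  have expand : ∀ g : ι → ℝ, ∑ t ∈ s, g t * (y t + ε * d t) =
      ∑ t ∈ s, g t * y t + ε * ∑ t ∈ s, g t * d t := fun g => by
    rw [mul_sum, ← sum_add_distrib]
    exact sum_congr rfl fun t _ => by ring
  refine ⟨fun t => y t + ε * d t, hnn, ?_, ?_, ?_, card_lt_card ?_⟩
  · rw [sum_add_distrib, ← mul_sum, hsum, mul_zero, add_zero]
  · rw [expand, hasum, mul_zero, add_zero]
  · rw [expand]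
    exact le_add_of_nonneg_right (mul_nonneg hε hwsum)
  · refine (ssubset_iff_of_subset fun t ht => ?_).2 ⟨j, ?_, by simp [hzero]⟩
    · by_contra hty
      have hdt := hd0 t hty
      simp_all
    · by_contra hjy
      exact hdj.ne (hd0 j hjy)

open Finset in
/-- Every nonnegative vector is dominated, for a linear objective, by one with at most two nonzero
coordinates having the same sum and the same weighted sum. -/
lemma exists_card_support_le_two {ι : Type*} {s : Finset ι} (a w : ι → ℝ) {y : ι → ℝ}
    (hy : ∀ t ∈ s, 0 ≤ y t) :
    ∃ z : ι → ℝ, (∀ t ∈ s, 0 ≤ z t) ∧ ∑ t ∈ s, z t = ∑ t ∈ s, y t ∧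
      ∑ t ∈ s, a t * z t = ∑ t ∈ s, a t * y t ∧ ∑ t ∈ s, w t * y t ≤ ∑ t ∈ s, w t * z t ∧
      #{t ∈ s | z t ≠ 0} ≤ 2 := by
  induction hn : #{t ∈ s | y t ≠ 0} using Nat.strong_induction_on generalizing y with
  | _ n ih =>
    rcases le_or_gt (#{t ∈ s | y t ≠ 0}) 2 with h | h
    · exact ⟨y, hy, rfl, rfl, le_rfl, h⟩
    · obtain ⟨x, hx, hx1, hxa, hxw, hlt⟩ := exists_card_support_lt a w hy h
      obtain ⟨z, hz, hz1, hza, hzw, hz2⟩ := ih _ (hn ▸ hlt) hx rfl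
      exact ⟨z, hz, hz1.trans hx1, hza.trans hxa, hxw.trans hzw, hz2⟩

/-- The caching LP attains its maximum. -/
lemma exists_feasible_forall_objF_le (K N : ℕ) (ρ α : ℝ) :
    ∃ y : ℕ → ℝ, Feasible K N ρ α y ∧ ∀ z : ℕ → ℝ, Feasible K N ρ α z → objF K z ≤ objF K y := by
  let box : Set (ℕ → ℝ) := Set.univ.pi fun _ => Set.Icc 0 1
  have hbox : IsCompact box := isCompact_univ_pi fun _ => isCompact_Icc
  have hclosed : IsClosed {y : ℕ → ℝ | Feasible K N ρ α y} := by
    simp only [Feasible, Set.ofPred_and, Set.ofPred_forall]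
    refine .inter (isClosed_le (by fun_prop) (by fun_prop))
      (.inter (isClosed_le (by fun_prop) (by fun_prop)) ?_)
    exact isClosed_iInter fun t => isClosed_iInter fun _ =>
      isClosed_le (by fun_prop) (by fun_prop)
  obtain ⟨y, ⟨-, hy⟩, hmax⟩ := (hbox.inter_right hclosed).exists_isMaxOn
    ⟨0, fun _ _ => ⟨le_rfl, zero_le_one⟩, by simp [Feasible]⟩
    (f := objF K) (by unfold objF; fun_prop)
  refine ⟨y, hy, fun z hz => ?_⟩
  let x : ℕ → ℝ := fun t => if t ∈ Finset.Icc 1 K then z t else 0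
  have hx : ∀ t ∈ Finset.Icc 1 K, x t = z t := fun t ht => if_pos ht
  have hsum : ∀ g : ℕ → ℝ, ∑ t ∈ Finset.Icc 1 K, g t * x t = ∑ t ∈ Finset.Icc 1 K, g t * z t :=
    fun g => Finset.sum_congr rfl fun t ht => by rw [hx t ht]
  have hobj : objF K x = objF K z := hsum _
  rw [← hobj]
  obtain ⟨hq, h1, hnn⟩ := hz
  refine hmax ⟨fun t _ => ?_, ?_, ?_, fun t ht => ?_⟩
  · by_cases ht : t ∈ Finset.Icc 1 K
    · rw [hx t ht]
      exact ⟨hnn t ht, (Finset.single_le_sum hnn ht).trans h1⟩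
    · simp only [x, if_neg ht]
      exact ⟨le_rfl, zero_le_one⟩
  · rwa [hsum]
  · rwa [Finset.sum_congr rfl hx]
  · rw [hx t ht]
    exact hnn t ht

theorem optimal_solution_with_at_most_two_types
    (K N : ℕ) (hK : 1 ≤ K) (hKN : K ≤ N) (α ρ : ℝ)
    (hα0 : 0 ≤ α) (hα1 : α ≤ 1) (hρ0 : 0 ≤ ρ) (hρ1 : ρ ≤ 1) :
    ∃ y : ℕ → ℝ, Feasible K N ρ α y ∧
      (∀ z : ℕ → ℝ, Feasible K N ρ α z → objF K z ≤ objF K y) ∧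
      ((Finset.Icc 1 K).filter (fun t => y t ≠ 0)).card ≤ 2 := by
  obtain ⟨y, ⟨hq, h1, hnn⟩, hmax⟩ := exists_feasible_forall_objF_le K N ρ α
  obtain ⟨z, hz, hz1, hzq, hzw, hcard⟩ :=
    exists_card_support_le_two (q K N ρ α) (fun t => (t : ℝ) / ((t : ℝ) + 1)) hnn
  exact ⟨z, ⟨hzq.trans_le hq, hz1.trans_le h1, hz⟩, fun x hx => (hmax x hx).trans hzw, hcard⟩
end

section
/- Assume ρ > 0 and let t ∈ {1,...,K−1}. Then the inequality (t/(t+1))·(1/q_t) ≥ ((t+1)/(t+2))·(1/q_{t+1}) holds if and only if α ≥ σ_t, where σ_t = 1 + log((t+1)/(t+2))/log((t+1)/t). Equivalently, the objective value of the caching LP at the corner point (1/q_t)·e_t is at least its value at (1/q_{t+1})·e_{t+1} exactly when α ≥ σ_t. -/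
/-- The `i`-th standard basis vector of `ℝ^K` (as a function on `ℕ`). -/
noncomputable def eVec (i : ℕ) : ℕ → ℝ := fun t => if t = i then 1 else 0

/-- The objective value at a corner, with the factor `s / (s + 1)` absorbed in the denominator. -/
lemma corner_value_eq (K N : ℕ) (ρ α : ℝ) (hK : 0 < K) (hρ : 0 < ρ) {s : ℕ} (hs : 1 ≤ s) :
    (s : ℝ) / ((s : ℝ) + 1) * (1 / q K N ρ α s) =
      K / (N * ρ * ((s : ℝ) ^ α * ((s + 1) / s)) + (K + 1)) := by
  have hs' : (0 : ℝ) < s := by exact_mod_cast hs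
  have hK' : (0 : ℝ) < K := by exact_mod_cast hK
  have hp : 0 < (s : ℝ) ^ α := Real.rpow_pos_of_pos hs' α
  have hd : (N : ℝ) * (ρ * (s : ℝ) ^ α) * (s + 1) + s * (K + 1) ≠ 0 := by positivity
  have hd' : (N : ℝ) * ρ * ((s : ℝ) ^ α * ((s + 1) / s)) + (K + 1) ≠ 0 := by positivity
  unfold q cCost
  rw [one_div_div, div_mul_div_comm, div_eq_div_iff (by positivity) hd']
  field_simp

lemma sigma_le_iff {t : ℕ} (ht : 1 ≤ t) (α : ℝ) :
    sigma t ≤ α ↔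
      (t : ℝ) ^ α * ((t + 1) / t) ≤ ((t : ℝ) + 1) ^ α * ((t + 2) / (t + 1)) := by
  have h0 : (0 : ℝ) < t := by exact_mod_cast ht
  have h1 : (0 : ℝ) < t + 1 := by positivity
  have h2 : (0 : ℝ) < t + 2 := by positivity
  have hp0 : 0 < (t : ℝ) ^ α := Real.rpow_pos_of_pos h0 α
  have hp1 : 0 < ((t : ℝ) + 1) ^ α := Real.rpow_pos_of_pos h1 α
  have hL : 0 < Real.log ((t : ℝ) + 1) - Real.log t :=
    sub_pos.mpr (Real.log_lt_log h0 (by linarith))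
  rw [← Real.log_le_log_iff (x := (t : ℝ) ^ α * ((t + 1) / t)) (by positivity) (by positivity),
    Real.log_mul hp0.ne' (by positivity), Real.log_mul hp1.ne' (by positivity),
    Real.log_rpow h0, Real.log_rpow h1, Real.log_div h1.ne' h0.ne', Real.log_div h2.ne' h1.ne']
  unfold sigma
  rw [Real.log_div h1.ne' h2.ne', Real.log_div h1.ne' h0.ne', ← le_sub_iff_add_le',
    div_le_iff₀ hL]
  constructor <;> intro h <;> linarith

lemma objF_smul_eVec {K s : ℕ} (hs : s ∈ Finset.Icc 1 K) (c : ℝ) :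
    objF K (fun i => c * eVec s i) = (s : ℝ) / ((s : ℝ) + 1) * c := by
  unfold objF eVec
  rw [Finset.sum_eq_single_of_mem s hs fun i _ hi => by simp [hi]]
  simp

theorem corner_comparison_iff_sigma
    (K N : ℕ) (hK : 2 ≤ K) (hKN : K ≤ N) (α ρ : ℝ)
    (hα0 : 0 ≤ α) (hα1 : α ≤ 1) (hρ0 : 0 < ρ) (hρ1 : ρ ≤ 1)
    (t : ℕ) (ht : 1 ≤ t) (htK : t ≤ K - 1) :
    (((t : ℝ) / ((t : ℝ) + 1)) * (1 / q K N ρ α t) ≥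
        (((t : ℝ) + 1) / ((t : ℝ) + 2)) * (1 / q K N ρ α (t + 1)) ↔ sigma t ≤ α) ∧
    (objF K (fun s => (1 / q K N ρ α t) * eVec t s) ≥
        objF K (fun s => (1 / q K N ρ α (t + 1)) * eVec (t + 1) s) ↔ sigma t ≤ α) := by
  have hK0 : 0 < K := by lia
  have hK' : (0 : ℝ) < K := by exact_mod_cast hK0
  have hN : (0 : ℝ) < N := by exact_mod_cast hK0.trans_le hKN
  have hcast : ((t + 1 : ℕ) : ℝ) / (((t + 1 : ℕ) : ℝ) + 1) = ((t : ℝ) + 1) / ((t : ℝ) + 2) := by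
    push_cast
    ring
  have key : ((t : ℝ) / ((t : ℝ) + 1)) * (1 / q K N ρ α t) ≥
      (((t : ℝ) + 1) / ((t : ℝ) + 2)) * (1 / q K N ρ α (t + 1)) ↔ sigma t ≤ α := by
    have h12 : (t : ℝ) + 1 + 1 = t + 2 := by ring
    rw [← hcast, corner_value_eq K N ρ α hK0 hρ0 ht,
      corner_value_eq K N ρ α hK0 hρ0 (Nat.le_add_left 1 t), sigma_le_iff ht, ge_iff_le,
      div_le_div_iff_of_pos_left hK' (by positivity) (by positivity), add_le_add_iff_right,
      mul_le_mul_iff_right₀ (by positivity)]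
    push_cast
    rw [h12]
  refine ⟨key, ?_⟩
  rw [objF_smul_eVec (Finset.mem_Icc.mpr ⟨ht, by lia⟩),
    objF_smul_eVec (Finset.mem_Icc.mpr ⟨by lia, by lia⟩), hcast]
  exact key
end

section
/- Suppose ρ > (K−1)/(2N) (the cost limited regime) and let t ∈ {1,...,K} satisfy σ_t ≤ α < σ_{t−1}. Then the point y* = (1/q_t)·e_t (i.e., y*_t = K·(t+1)/(N·c_t·(t+1) + t·(K+1)) and all other coordinates zero) is an optimal solution of the caching LP, with optimal value K·t/(N·c_t·(t+1) + t·(K+1)). -/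
/-- `σ_t = 1 + log((t+1)/(t+2)) / log((t+1)/t)` for `1 ≤ t ≤ K−1`, with the
conventions `σ_0 = 1` and `σ_K = 0`. -/
noncomputable def sigmaK (K t : ℕ) : ℝ :=
  if t = 0 then 1
  else if t = K then 0
  else 1 + Real.log (((t : ℝ) + 1) / ((t : ℝ) + 2)) / Real.log (((t : ℝ) + 1) / (t : ℝ))

/-- The relative cost `x ↦ x^α (x+1) / x` of a subfile type. -/
noncomputable def relCost (α x : ℝ) : ℝ := x ^ α * (x + 1) / x

lemma relCost_exp (α u : ℝ) :
    relCost α (Real.exp u) = Real.exp (α * u) + Real.exp ((α - 1) * u) := by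
  rw [relCost, ← Real.exp_mul, mul_add, mul_one, add_div,
    mul_div_cancel_right₀ _ (Real.exp_ne_zero u), ← Real.exp_sub]
  ring_nf

lemma convexOn_relCost_exp (α : ℝ) :
    ConvexOn ℝ Set.univ (fun u => relCost α (Real.exp u)) := by
  have key (a : ℝ) : ConvexOn ℝ Set.univ (fun u => Real.exp (a * u)) :=
    convexOn_exp.comp_linearMap (LinearMap.mul ℝ ℝ a)
  simp only [relCost_exp]
  exact (key α).add (key (α - 1))

lemma relCost_le_of_le_of_lt {α x y z : ℝ} (hx : 0 < x) (hxy : x < y) (hyz : y ≤ z)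
    (h : relCost α x ≤ relCost α y) : relCost α x ≤ relCost α z := by
  rcases hyz.eq_or_lt with rfl | hyz
  · exact h
  have hy := hx.trans hxy
  have := (convexOn_relCost_exp α).le_right_of_left_le'' (Set.mem_univ (Real.log x))
    (Set.mem_univ (Real.log z)) (Real.log_lt_log hx hxy) (Real.log_lt_log hy hyz).le
    (by simpa only [Real.exp_log hx, Real.exp_log hy] using h)
  simp only [Real.exp_log hy, Real.exp_log (hy.trans hyz)] at this
  exact h.trans this

lemma relCost_le_of_lt_of_le {α x y z : ℝ} (hx : 0 < x) (hxy : x ≤ y) (hyz : y < z)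
    (h : relCost α z ≤ relCost α y) : relCost α z ≤ relCost α x := by
  rcases hxy.eq_or_lt with rfl | hxy
  · exact h
  have hy := hx.trans hxy
  have := (convexOn_relCost_exp α).le_left_of_right_le'' (Set.mem_univ (Real.log x))
    (Set.mem_univ (Real.log z)) (Real.log_lt_log hx hxy).le (Real.log_lt_log hy hyz)
    (by simpa only [Real.exp_log (hy.trans hyz), Real.exp_log hy] using h)
  simp only [Real.exp_log hy, Real.exp_log hx] at this
  exact h.trans this

/-- The threshold at which the relative costs of `x` and `x + 1` agree. -/
lemma relCost_le_relCost_add_one_iff {α x : ℝ} (hx : 0 < x) :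
    relCost α x ≤ relCost α (x + 1) ↔
      1 + Real.log ((x + 1) / (x + 2)) / Real.log ((x + 1) / x) ≤ α := by
  have hx1 : 0 < x + 1 := by linarith
  have hx2 : 0 < x + 2 := by linarith
  have hlog : 0 < Real.log (x + 1) - Real.log x :=
    sub_pos.2 (Real.log_lt_log hx (by linarith))
  have hrel {y : ℝ} (hy : 0 < y) : 0 < relCost α y := by
    unfold relCost; positivity
  have hlrel {y : ℝ} (hy : 0 < y) :
      Real.log (relCost α y) = α * Real.log y + Real.log (y + 1) - Real.log y := by
    rw [relCost, Real.log_div (by positivity) hy.ne', Real.log_mul (by positivity) (by positivity),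
      Real.log_rpow hy]
  rw [← Real.log_le_log_iff (hrel hx) (hrel hx1), hlrel hx, hlrel hx1,
    Real.log_div hx1.ne' hx2.ne', Real.log_div hx1.ne' hx.ne', ← le_sub_iff_add_le',
    div_le_iff₀ hlog, show x + 1 + 1 = x + 2 by ring]
  constructor <;> intro h <;> linarith

/-- A subfile type between consecutive thresholds has the least relative cost. -/
lemma relCost_le_of_sigmaK {K t s : ℕ} {α : ℝ} (ht : 1 ≤ t) (htK : t ≤ K)
    (hσ₁ : sigmaK K t ≤ α) (hσ₂ : α < sigmaK K (t - 1)) (hs : 1 ≤ s) (hsK : s ≤ K) :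
    relCost α t ≤ relCost α s := by
  rcases lt_trichotomy t s with h | rfl | h
  · have ht0 : (0 : ℝ) < t := by exact_mod_cast ht
    rw [sigmaK, if_neg (by omega), if_neg (by omega), ← relCost_le_relCost_add_one_iff ht0] at hσ₁
    exact relCost_le_of_le_of_lt ht0 (by linarith) (by exact_mod_cast h) hσ₁
  · rfl
  · obtain ⟨r, rfl⟩ : ∃ r, t = r + 1 := ⟨t - 1, by omega⟩
    have hr0 : (0 : ℝ) < r := by exact_mod_cast (by omega : 0 < r)
    rw [Nat.add_sub_cancel, sigmaK, if_neg (by omega), if_neg (by omega), ← not_le,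
      ← relCost_le_relCost_add_one_iff hr0, not_le] at hσ₂
    push_cast
    exact relCost_le_of_lt_of_le (by exact_mod_cast hs) (by exact_mod_cast (by omega : s ≤ r))
      (by linarith) hσ₂.le

lemma q_eq_mul_relCost {K N s : ℕ} {ρ α : ℝ} (hs : 1 ≤ s) :
    q K N ρ α s = (s : ℝ) / (s + 1) * ((N * ρ * relCost α s + (K + 1)) / K) := by
  have hs0 : (0 : ℝ) < s := by exact_mod_cast hs
  rw [q, cCost, relCost, div_mul_div_comm, mul_comm (K : ℝ)]
  congr 1
  field_simp

/-- In the cost limited regime every `q_t` is at least `1`. -/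
lemma one_le_q {K N t : ℕ} {ρ α : ℝ} (hK : 1 ≤ K) (hKN : K ≤ N) (hα0 : 0 ≤ α) (hρ0 : 0 ≤ ρ)
    (hρ : ((K : ℝ) - 1) / (2 * (N : ℝ)) < ρ) (ht : 1 ≤ t) : 1 ≤ q K N ρ α t := by
  have hK0 : (1 : ℝ) ≤ K := by exact_mod_cast hK
  have hN0 : (0 : ℝ) < N := by exact_mod_cast (by omega : 0 < N)
  have ht0 : (1 : ℝ) ≤ t := by exact_mod_cast ht
  rw [div_lt_iff₀ (by positivity)] at hρ
  have hc : ρ ≤ cCost ρ α t := le_mul_of_one_le_right hρ0 (Real.one_le_rpow ht0 hα0)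
  have hNc : (K - 1 : ℝ) / 2 ≤ N * cCost ρ α t := by nlinarith
  rw [q, one_le_div (by positivity)]
  nlinarith

theorem cost_limited_regime_optimal
    (K N : ℕ) (hK : 1 ≤ K) (hKN : K ≤ N) (α ρ : ℝ)
    (hα0 : 0 ≤ α) (hα1 : α ≤ 1) (hρ0 : 0 ≤ ρ) (hρ1 : ρ ≤ 1)
    (hρ : ((K : ℝ) - 1) / (2 * (N : ℝ)) < ρ)
    (t : ℕ) (ht : 1 ≤ t) (htK : t ≤ K)
    (hσ₁ : sigmaK K t ≤ α) (hσ₂ : α < sigmaK K (t - 1)) :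
    Feasible K N ρ α (fun s => if s = t then 1 / q K N ρ α t else 0) ∧
    (∀ z : ℕ → ℝ, Feasible K N ρ α z →
      objF K z ≤ objF K (fun s => if s = t then 1 / q K N ρ α t else 0)) ∧
    (1 / q K N ρ α t =
      (K : ℝ) * ((t : ℝ) + 1) /
        ((N : ℝ) * cCost ρ α t * ((t : ℝ) + 1) + (t : ℝ) * ((K : ℝ) + 1))) ∧
    objF K (fun s => if s = t then 1 / q K N ρ α t else 0) =
      (K : ℝ) * (t : ℝ) /
        ((N : ℝ) * cCost ρ α t * ((t : ℝ) + 1) + (t : ℝ) * ((K : ℝ) + 1)) := by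
  have hK0 : (0 : ℝ) < K := by exact_mod_cast hK
  have ht0 : (0 : ℝ) < t := by exact_mod_cast ht
  have hq := one_le_q hK hKN hα0 hρ0 hρ ht
  have hq0 : 0 < q K N ρ α t := by linarith
  have htmem : t ∈ Finset.Icc 1 K := Finset.mem_Icc.2 ⟨ht, htK⟩
  have hobj : objF K (fun s => if s = t then 1 / q K N ρ α t else 0) =
      (t : ℝ) / (t + 1) * (1 / q K N ρ α t) := by
    simp only [objF, mul_ite, mul_zero, Finset.sum_ite_eq', if_pos htmem]
  have hinv : 1 / q K N ρ α t = (K : ℝ) * ((t : ℝ) + 1) /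
      ((N : ℝ) * cCost ρ α t * ((t : ℝ) + 1) + (t : ℝ) * ((K : ℝ) + 1)) := by
    rw [q, one_div_div]
  refine ⟨⟨?_, ?_, fun s _ => ?_⟩, fun z hz => ?_, hinv, ?_⟩
  · simp only [mul_ite, mul_zero, Finset.sum_ite_eq', if_pos htmem]
    rw [mul_one_div_cancel hq0.ne']
  · simp only [Finset.sum_ite_eq', if_pos htmem]
    rwa [div_le_one hq0]
  · dsimp only
    split_ifs <;> positivity
  · rw [hobj]
    have hcoef : ∀ s ∈ Finset.Icc 1 K,
        (s : ℝ) / (s + 1) ≤ (t : ℝ) / (t + 1) * (1 / q K N ρ α t) * q K N ρ α s := by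
      intro s hs
      obtain ⟨hs1, hsK⟩ := Finset.mem_Icc.1 hs
      have hle := relCost_le_of_sigmaK ht htK hσ₁ hσ₂ hs1 hsK
      rw [mul_one_div, div_mul_eq_mul_div, le_div_iff₀ hq0, q_eq_mul_relCost ht,
        q_eq_mul_relCost hs1, mul_left_comm]
      gcongr
    calc objF K z
        ≤ ∑ s ∈ Finset.Icc 1 K,
            (t : ℝ) / (t + 1) * (1 / q K N ρ α t) * (q K N ρ α s * z s) := by
          refine Finset.sum_le_sum fun s hs => ?_
          rw [← mul_assoc]
          exact mul_le_mul_of_nonneg_right (hcoef s hs) (hz.2.2 s hs)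
      _ ≤ (t : ℝ) / (t + 1) * (1 / q K N ρ α t) := by
          rw [← Finset.mul_sum]
          exact mul_le_of_le_one_right (by positivity) hz.1
  · rw [hobj, hinv, div_mul_div_comm, mul_comm ((t : ℝ) + 1),
      show (t : ℝ) * (K * (t + 1)) = K * t * (t + 1) by ring,
      mul_div_mul_right _ _ (by positivity)]
end

section
/- (Claim 1) Let a ∈ {1,...,K−1}, b = a+1, and suppose q_a ≤ 1 < q_b. Fix i ≤ a with q_i ≤ 1. Then among the intersection points p(i,j) for j ∈ {b,...,K}, the LP objective f is maximized at j = b: for every j with b ≤ j ≤ K, f(p(i,b)) ≥ f(p(i,j)). -/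
/-- The intersection point `p(i,j)`: `y_i = (q_j − 1)/(q_j − q_i)`,
`y_j = (1 − q_i)/(q_j − q_i)`, and `y_t = 0` otherwise. -/
noncomputable def pInter (K N : ℕ) (ρ α : ℝ) (i j : ℕ) : ℕ → ℝ := fun t =>
  if t = i then (q K N ρ α j - 1) / (q K N ρ α j - q K N ρ α i)
  else if t = j then (1 - q K N ρ α i) / (q K N ρ α j - q K N ρ α i)
  else 0

/-- On `[1, ∞)` the function `log` lies above its tangents when expressed in the
variable `t / (t + 1)`. -/
lemma tangent_le_log {b t : ℝ} (hb : 1 ≤ b) (ht : 1 ≤ t) :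
    (t / (t + 1) - b / (b + 1)) * ((b + 1) ^ 2 / b) ≤ Real.log (t / b) := by
  have hb0 : 0 < b := by linarith
  have ht0 : 0 < t := by linarith
  have tangent_eq : (t / (t + 1) - b / (b + 1)) * ((b + 1) ^ 2 / b) =
      (t - b) * (b + 1) / ((t + 1) * b) := by
    field_simp
    ring
  rw [tangent_eq]
  rcases le_total b t with hbt | htb
  · have hlog := Real.le_log_one_add_of_nonneg (x := t / b - 1)
      (by rw [sub_nonneg, le_div_iff₀ hb0]; linarith)
    rw [show 1 + (t / b - 1) = t / b by ring] at hlog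
    refine le_trans ?_ hlog
    have : 2 * (t / b - 1) / (t / b - 1 + 2) = 2 * (t - b) / (t + b) := by
      have : t / b - 1 + 2 ≠ 0 := by
        have : 0 < t / b := by positivity
        linarith
      field_simp
      ring
    rw [this, div_le_div_iff₀ (by positivity) (by positivity)]
    nlinarith [mul_nonneg (sub_nonneg.2 hbt) (mul_nonneg (sub_nonneg.2 hb) (sub_nonneg.2 hbt))]
  · have hlog : Real.log (b / t) ≤ (b / t - (b / t)⁻¹) / 2 := by
      rw [← Real.sinh_log (by positivity)]
      exact Real.self_le_sinh_iff.2 (Real.log_nonneg ((one_le_div ht0).2 htb))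
    rw [inv_div, ← inv_div t b, Real.log_inv, inv_div] at hlog
    have : (b / t - t / b) / 2 ≤ (b - t) * (b + 1) / ((t + 1) * b) := by
      have : (b / t - t / b) / 2 = (b - t) * (b + t) / (2 * t * b) := by
        field_simp
        ring
      rw [this, div_le_div_iff₀ (by positivity) (by positivity)]
      have key : 0 ≤ (b - t) * b * ((t - 1) * (b - t)) :=
        mul_nonneg (mul_nonneg (sub_nonneg.2 htb) hb0.le)
          (mul_nonneg (sub_nonneg.2 ht) (sub_nonneg.2 htb))
      nlinarith
    have neg_eq : (t - b) * (b + 1) / ((t + 1) * b) =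
        -((b - t) * (b + 1) / ((t + 1) * b)) := by ring
    linarith

/-- For `α ≥ 0`, on `[1, ∞)` the function `t ^ α` lies above its tangents when expressed in
the variable `t / (t + 1)`. -/
lemma tangent_le_rpow {α b t : ℝ} (hα : 0 ≤ α) (hb : 1 ≤ b) (ht : 1 ≤ t) :
    b ^ α * α * ((b + 1) ^ 2 / b) * (t / (t + 1) - b / (b + 1)) ≤ t ^ α - b ^ α := by
  have hb0 : 0 < b := by linarith
  have ht0 : 0 < t := by linarith
  have rpow_eq : t ^ α = b ^ α * Real.exp (Real.log (t / b) * α) := by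
    rw [← Real.rpow_def_of_pos (by positivity), ← Real.mul_rpow hb0.le (by positivity),
      mul_div_cancel₀ _ hb0.ne']
  have hexp := Real.add_one_le_exp (Real.log (t / b) * α)
  have hlog := mul_le_mul_of_nonneg_right (tangent_le_log hb ht) hα
  have hmul := mul_le_mul_of_nonneg_left (by linarith :
    (t / (t + 1) - b / (b + 1)) * ((b + 1) ^ 2 / b) * α + 1 ≤
      Real.exp (Real.log (t / b) * α)) (Real.rpow_nonneg hb0.le α)
  rw [rpow_eq]
  linarith

lemma div_add_one_lt_div_add_one {s t : ℝ} (hs : 0 ≤ s) (hst : s < t) :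
    s / (s + 1) < t / (t + 1) := by
  rw [div_lt_div_iff₀ (by linarith) (by linarith)]
  linarith

/-- For `α ≥ 0`, secant slopes of `t ^ α` in the variable `t / (t + 1)` based at `i ≥ 1`
are monotone. -/
lemma rpow_secant_mono {α i b j : ℝ} (hα : 0 ≤ α) (hi : 1 ≤ i) (hib : i < b) (hbj : b ≤ j) :
    (j / (j + 1) - i / (i + 1)) * (b ^ α - i ^ α) ≤
      (b / (b + 1) - i / (i + 1)) * (j ^ α - i ^ α) := by
  have hj := tangent_le_rpow hα (hi.trans hib.le) (hi.trans (hib.le.trans hbj))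
  have hi' := tangent_le_rpow hα (hi.trans hib.le) hi
  have hgi := div_add_one_lt_div_add_one (by linarith) hib
  have hgj : b / (b + 1) ≤ j / (j + 1) := by
    rcases hbj.eq_or_lt with rfl | h
    · rfl
    · exact (div_add_one_lt_div_add_one (by linarith) h).le
  have hmj := mul_le_mul_of_nonneg_left hj (sub_nonneg.2 hgi.le)
  have hmi := mul_le_mul_of_nonneg_left hi' (sub_nonneg.2 hgj)
  linarith

lemma q_eq {K : ℕ} (N : ℕ) (ρ α : ℝ) (hK : 0 < K) (t : ℕ) :
    q K N ρ α t = N * ρ / K * (t : ℝ) ^ α + (K + 1) / K * ((t : ℝ) / (t + 1)) := by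
  have : (K : ℝ) ≠ 0 := by positivity
  unfold q cCost
  field_simp

lemma q_lt_q {K : ℕ} (N : ℕ) {ρ α : ℝ} (hK : 0 < K) (hρ : 0 ≤ ρ) (hα : 0 ≤ α) {s t : ℕ}
    (hst : s < t) : q K N ρ α s < q K N ρ α t := by
  have hst' : (s : ℝ) < t := by exact_mod_cast hst
  have hg := div_add_one_lt_div_add_one (Nat.cast_nonneg s) hst'
  have hp := Real.rpow_le_rpow (Nat.cast_nonneg s) hst'.le hα
  rw [q_eq N ρ α hK, q_eq N ρ α hK]
  exact add_lt_add_of_le_of_lt (mul_le_mul_of_nonneg_left hp (by positivity))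
    (mul_lt_mul_of_pos_left hg (by positivity))

lemma objF_pInter {K N : ℕ} {ρ α : ℝ} {i j : ℕ} (hi : i ∈ Finset.Icc 1 K)
    (hj : j ∈ Finset.Icc 1 K) (hq : q K N ρ α i < q K N ρ α j) :
    objF K (pInter K N ρ α i j) = (i : ℝ) / (i + 1) + (1 - q K N ρ α i) *
      (((j : ℝ) / (j + 1) - (i : ℝ) / (i + 1)) / (q K N ρ α j - q K N ρ α i)) := by
  have hij : i ≠ j := fun h => hq.ne (by rw [h])
  have hd : q K N ρ α j - q K N ρ α i ≠ 0 := (sub_pos.2 hq).ne'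
  unfold objF
  rw [Finset.sum_eq_add_of_mem i j hi hj hij
    (fun t _ ht => by simp [pInter, ht.1, ht.2])]
  simp only [pInter, if_true, if_neg hij.symm]
  have split : (q K N ρ α j - 1) / (q K N ρ α j - q K N ρ α i) =
      1 - (1 - q K N ρ α i) / (q K N ρ α j - q K N ρ α i) := by
    field_simp
    ring
  rw [split]
  ring

theorem claim1_intersection_maximized_at_b
    (K N : ℕ) (hK : 2 ≤ K) (hKN : K ≤ N) (α ρ : ℝ)
    (hα0 : 0 ≤ α) (hα1 : α ≤ 1) (hρ0 : 0 ≤ ρ) (hρ1 : ρ ≤ 1)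
    (a : ℕ) (ha : 1 ≤ a) (haK : a + 1 ≤ K)
    (hqa : q K N ρ α a ≤ 1) (hqb : 1 < q K N ρ α (a + 1))
    (i : ℕ) (hi : 1 ≤ i) (hia : i ≤ a) (hqi : q K N ρ α i ≤ 1) :
    ∀ j : ℕ, a + 1 ≤ j → j ≤ K →
      objF K (pInter K N ρ α i j) ≤ objF K (pInter K N ρ α i (a + 1)) := by
  intro j hbj hjK
  have hK0 : 0 < K := by omega
  have hqib := q_lt_q N hK0 hρ0 hα0 (show i < a + 1 by omega)
  have hqij := q_lt_q N hK0 hρ0 hα0 (show i < j by omega)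
  rw [objF_pInter (Finset.mem_Icc.2 ⟨hi, by omega⟩) (Finset.mem_Icc.2 ⟨by omega, hjK⟩) hqij,
    objF_pInter (Finset.mem_Icc.2 ⟨hi, by omega⟩) (Finset.mem_Icc.2 ⟨by omega, haK⟩) hqib]
  gcongr ?_ + ?_ * ?_
  · linarith
  rw [div_le_div_iff₀ (sub_pos.2 hqij) (sub_pos.2 hqib)]
  have hsecant := mul_le_mul_of_nonneg_left
    (rpow_secant_mono (i := i) (b := (a + 1 : ℕ)) (j := j) hα0 (by exact_mod_cast hi)
      (by exact_mod_cast (show i < a + 1 by omega)) (by exact_mod_cast hbj))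
    (show 0 ≤ N * ρ / K by positivity)
  simp only [q_eq N ρ α hK0]
  linarith
end

section
/- (Architecture limited regime optimality, single-type case) Let a ∈ {1,...,K−1}, b = a+1, and suppose γ_{a+1} < ρ ≤ γ_a (equivalently q_a ≤ 1 < q_b). Let j ∈ {b,...,K} satisfy σ_j ≤ α < σ_{j−1}. Then the point y* = (1/q_j)·e_j (i.e., y*_j = 1/q_j and all other coordinates zero) is an optimal solution of the caching LP. -/
/-- `γ_t = (K−t)/(t^α·(t+1)·N)`. -/
noncomputable def gam (K N : ℕ) (α : ℝ) (t : ℕ) : ℝ :=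
  ((K : ℝ) - (t : ℝ)) / ((t : ℝ) ^ α * ((t : ℝ) + 1) * (N : ℝ))

/-- `t^(α-1)·(t+1)` written as a function of `u = log t`. -/
noncomputable def placementCost (α u : ℝ) : ℝ := Real.exp (α * u) + Real.exp ((α - 1) * u)

lemma convexOn_exp_const_mul (c : ℝ) : ConvexOn ℝ Set.univ fun u : ℝ => Real.exp (c * u) := by
  exact convexOn_exp.comp_linearMap (c • (LinearMap.id : ℝ →ₗ[ℝ] ℝ))

lemma convexOn_placementCost (α : ℝ) : ConvexOn ℝ Set.univ (placementCost α) :=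
  (convexOn_exp_const_mul α).add (convexOn_exp_const_mul (α - 1))

lemma placementCost_log {α x : ℝ} (hx : 0 < x) :
    placementCost α (Real.log x) = Real.exp ((α - 1) * Real.log x) * (x + 1) := by
  have h : Real.exp (α * Real.log x) = Real.exp ((α - 1) * Real.log x) * x := by
    nth_rewrite 3 [← Real.exp_log hx]
    rw [← Real.exp_add]
    ring_nf
  rw [placementCost, h]
  ring

lemma log_placementCost_log {α x : ℝ} (hx : 0 < x) :
    Real.log (placementCost α (Real.log x)) = (α - 1) * Real.log x + Real.log (x + 1) := by
  rw [placementCost_log hx, Real.log_mul (by positivity) (by positivity), Real.log_exp]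

lemma placementCost_pos (α u : ℝ) : 0 < placementCost α u := by
  unfold placementCost
  positivity

/-- The threshold `σ_x` decides whether the placement cost increases from `x` to `x + 1`. -/
lemma placementCost_log_le_succ_iff {α x : ℝ} (hx : 0 < x) :
    placementCost α (Real.log x) ≤ placementCost α (Real.log (x + 1)) ↔
      1 + Real.log ((x + 1) / (x + 2)) / Real.log ((x + 1) / x) ≤ α := by
  have hlog : 0 < Real.log ((x + 1) / x) := Real.log_pos (by rw [lt_div_iff₀ hx]; linarith)
  rw [← Real.log_le_log_iff (placementCost_pos _ _) (placementCost_pos _ _),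
    log_placementCost_log hx, log_placementCost_log (by positivity), add_comm (1 : ℝ),
    ← le_sub_iff_add_le (a := Real.log _ / _), div_le_iff₀ hlog, Real.log_div (by positivity) (by positivity),
    Real.log_div (by positivity) hx.ne', show x + 1 + 1 = x + 2 by ring]
  constructor <;> intro h <;> linarith

/-- A convex function that does not increase from `v` to `w` is at least `f w` left of `v`. -/
lemma ConvexOn.le_of_le_of_lt_left {f : ℝ → ℝ} (hf : ConvexOn ℝ Set.univ f) {u v w : ℝ}
    (huv : u ≤ v) (hvw : v < w) (h : f w ≤ f v) : f w ≤ f u := by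
  rcases huv.eq_or_lt with rfl | huv
  · exact h
  by_contra! hlt
  have hv : v ∈ openSegment ℝ w u := by
    rw [openSegment_symm, openSegment_eq_Ioo (huv.trans hvw)]
    exact ⟨huv, hvw⟩
  exact h.not_gt (hf.lt_left_of_right_lt trivial trivial hv (hlt.trans_le h))

/-- A convex function that does not decrease from `w` to `v` is at least `f w` right of `v`. -/
lemma ConvexOn.le_of_le_of_lt_right {f : ℝ → ℝ} (hf : ConvexOn ℝ Set.univ f) {u v w : ℝ}
    (hvu : v ≤ u) (hwv : w < v) (h : f w ≤ f v) : f w ≤ f u := by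
  rcases hvu.eq_or_lt with rfl | hvu
  · exact h
  by_contra! hlt
  have hv : v ∈ openSegment ℝ w u := by
    rw [openSegment_eq_Ioo (hwv.trans hvu)]
    exact ⟨hwv, hvu⟩
  exact h.not_gt (hf.lt_left_of_right_lt trivial trivial hv (hlt.trans_le h))

lemma placementCost_le_of_sigmaK {K j t : ℕ} {α : ℝ} (hj : 2 ≤ j) (hjK : j ≤ K)
    (hσ₁ : sigmaK K j ≤ α) (hσ₂ : α < sigmaK K (j - 1)) (ht : 1 ≤ t) (htK : t ≤ K) :
    placementCost α (Real.log j) ≤ placementCost α (Real.log t) := by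
  have ht0 : (0 : ℝ) < t := by exact_mod_cast ht
  rcases lt_trichotomy t j with h | rfl | h
  · obtain ⟨i, rfl⟩ : ∃ i, j = i + 1 := ⟨j - 1, by omega⟩
    have hi : (0 : ℝ) < i := by exact_mod_cast (by omega : 0 < i)
    rw [Nat.add_sub_cancel, sigmaK, if_neg (by omega), if_neg (by omega), ← not_le,
      ← placementCost_log_le_succ_iff hi, not_le] at hσ₂
    push_cast
    exact (convexOn_placementCost α).le_of_le_of_lt_left
      (Real.log_le_log ht0 (by exact_mod_cast (by omega : t ≤ i)))
      (Real.log_lt_log hi (by linarith)) hσ₂.le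
  · exact le_rfl
  · have hj0 : (0 : ℝ) < j := by exact_mod_cast (by omega : 0 < j)
    rw [sigmaK, if_neg (by omega), if_neg (by omega),
      ← placementCost_log_le_succ_iff hj0] at hσ₁
    exact (convexOn_placementCost α).le_of_le_of_lt_right
      (Real.log_le_log (by positivity) (by exact_mod_cast h))
      (Real.log_lt_log hj0 (by linarith)) hσ₁

lemma q_eq_placementCost {K N t : ℕ} {ρ α : ℝ} (hK : 0 < K) (ht : 0 < t) :
    q K N ρ α t = (t : ℝ) / (t + 1) *
      ((N * ρ * placementCost α (Real.log t) + (K + 1)) / K) := by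
  have hK' : (0 : ℝ) < K := by exact_mod_cast hK
  have ht' : (0 : ℝ) < t := by exact_mod_cast ht
  have h : placementCost α (Real.log t) = (t : ℝ) ^ α * (t + 1) / t := by
    rw [placementCost_log ht', mul_comm (α - 1), ← Real.rpow_def_of_pos ht',
      Real.rpow_sub_one ht'.ne']
    ring
  rw [h, q, cCost]
  field_simp

lemma q_mono {K N s t : ℕ} {ρ α : ℝ} (hρ : 0 ≤ ρ) (hα : 0 ≤ α) (hst : s ≤ t) :
    q K N ρ α s ≤ q K N ρ α t := by
  have hq (r : ℕ) : q K N ρ α r =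
      N * (ρ * (r : ℝ) ^ α) / K + (1 - 1 / ((r : ℝ) + 1)) * ((K + 1) / K) := by
    rcases Nat.eq_zero_or_pos K with rfl | hK
    · simp [q]
    have hK' : (0 : ℝ) < K := by exact_mod_cast hK
    rw [q, cCost]
    field_simp
    ring
  have hst' : (s : ℝ) ≤ t := by exact_mod_cast hst
  rw [hq, hq]
  gcongr

lemma one_lt_q_of_gam_lt {K N t : ℕ} {ρ α : ℝ} (hK : 0 < K) (hN : 0 < N) (ht : 0 < t)
    (h : gam K N α t < ρ) : 1 < q K N ρ α t := by
  have hK' : (0 : ℝ) < K := by exact_mod_cast hK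
  have hN' : (0 : ℝ) < N := by exact_mod_cast hN
  have ht' : (0 : ℝ) < t := by exact_mod_cast ht
  have hp : (0 : ℝ) < (t : ℝ) ^ α := by positivity
  rw [gam, div_lt_iff₀ (by positivity)] at h
  rw [q, cCost, lt_div_iff₀ (by positivity)]
  linarith

theorem architecture_limited_regime_single_type_optimal
    (K N : ℕ) (hK : 2 ≤ K) (hKN : K ≤ N) (α ρ : ℝ)
    (hα0 : 0 ≤ α) (hα1 : α ≤ 1) (hρ0 : 0 ≤ ρ) (hρ1 : ρ ≤ 1)
    (a : ℕ) (ha : 1 ≤ a) (haK : a + 1 ≤ K)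
    (hγ₁ : gam K N α (a + 1) < ρ) (hγ₂ : ρ ≤ gam K N α a)
    (j : ℕ) (hj : a + 1 ≤ j) (hjK : j ≤ K)
    (hσ₁ : sigmaK K j ≤ α) (hσ₂ : α < sigmaK K (j - 1)) :
    Feasible K N ρ α (fun s => if s = j then 1 / q K N ρ α j else 0) ∧
    (∀ z : ℕ → ℝ, Feasible K N ρ α z →
      objF K z ≤ objF K (fun s => if s = j then 1 / q K N ρ α j else 0)) := by
  have hqj : 1 < q K N ρ α j :=
    (one_lt_q_of_gam_lt (by omega) (by omega) (by omega) hγ₁).trans_le (q_mono hρ0 hα0 hj)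
  have hq0 : 0 < q K N ρ α j := by linarith
  have hmem : j ∈ Finset.Icc 1 K := Finset.mem_Icc.2 ⟨by omega, hjK⟩
  have hK0 : (0 : ℝ) < K := by exact_mod_cast (by omega : 0 < K)
  have hj0 : (0 : ℝ) < j := by exact_mod_cast (by omega : 0 < j)
  refine ⟨⟨?_, ?_, ?_⟩, ?_⟩
  · simp [hmem, hq0.ne']
  · simpa [hmem] using inv_le_one_of_one_le₀ hqj.le
  · intro t _
    dsimp only
    split_ifs <;> positivity
  rintro z ⟨hz, -, hz0⟩
  set R : ℕ → ℝ := fun t => (N * ρ * placementCost α (Real.log t) + (K + 1)) / K with hR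
  have hRpos : 0 < R j := by
    have := placementCost_pos α (Real.log j)
    simp only [hR]
    positivity
  have hval : objF K (fun s => if s = j then 1 / q K N ρ α j else 0) = 1 / R j := by
    have hqR : q K N ρ α j = (j : ℝ) / (j + 1) * R j :=
      q_eq_placementCost (by omega) (by omega)
    simp only [objF, mul_ite, mul_zero, Finset.sum_ite_eq', hmem, if_true, hqR]
    field_simp
  rw [hval, le_div_iff₀ hRpos, objF, Finset.sum_mul]
  refine (Finset.sum_le_sum fun t ht => ?_).trans hz
  have hzt := hz0 t ht
  obtain ⟨ht1, htK⟩ := Finset.mem_Icc.1 ht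
  have hRt : R j ≤ R t := by
    have := placementCost_le_of_sigmaK (by omega) hjK hσ₁ hσ₂ ht1 htK
    simp only [hR]
    gcongr
  calc (t : ℝ) / (t + 1) * z t * R j ≤ (t : ℝ) / (t + 1) * z t * R t := by gcongr
    _ = q K N ρ α t * z t := by
      rw [q_eq_placementCost (by omega) (by omega)]
      ring
end
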